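/- Let G, H be closed permutation groups on an infinite set X with H ≤ G, G and H orbit-equivalent, and G primitive but not 2-transitive. Then H = G. -/

import Mathlib

/-- A closed subgroup of Sym(X): contains every permutation that agrees with elements of the
    group on every finite set. -/
def IsClosedGroup {X : Type*} (H : Subgroup (Equiv.Perm X)) : Prop :=
  ∀ g : Equiv.Perm X, (∀ s : Finset X, ∃ h ∈ H, ∀ x ∈ s, h x = g x) → g ∈ H

/-!
Call `G` locally rigid if for every finite `A` there is a finite `B` whose setwise stabiliser in `G`
fixes `A` pointwise. For `g ∈ G`, orbit equivalence gives `h ∈ H` with `h '' B = g '' B`; then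
`h⁻¹ * g` stabilises `B`, so `h` and `g` agree on `A`. Hence `H` is dense in `G`, and being closed
it is equal to `G`.

It remains to see that a primitive group that is not 2-transitive is locally rigid. Such a group
preserves a graph that is neither empty nor complete, or a tournament. By primitivity, the sets of
points at which two distinct points `x` and `y` differ are either all infinite or all finite.

If they are infinite and an automorphism `f` of the structure induced on `B` moves `a ∈ A`,
Ramsey's theorem gives a homogeneous set `K` with more than `|B|` elements at all of which `a` and
`f a` differ. An automorphism of `B ∪ K` maps some point of `K` into `K`. This lets one correct
it, without changing it on `A`, so that it fixes `K` pointwise; hence it cannot map `a` to `f a`.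
As `A` has only finitely many images under automorphisms of `B`, iterating this leaves only the
identity on `A`. In the graph case the points of `A` must have no twins in `K`; when every point
is a limit of other points, this is arranged by a minimal choice of `B`, and `K` replaces a point
of `B` that its points imitate.

If they are finite, joining points with few differences gives an invariant locally finite graph,
unless the given graph or its complement is one already. A point `w` far away from `B` is then fixed
by the stabiliser of `B ∪ {w}`, and `w` plays the part of `K`.
-/

open MulAction
open scoped Pointwise

section Primitivity

variable {G X α : Type*} [Group G] [MulAction G X] {c : X → X → α}

/-- A colouring of the ordered pairs of points that the action preserves. A binary relation is a
colouring with colours in `Prop`. -/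
def InvariantColoring (G : Type*) {X α : Type*} [Group G] [MulAction G X] (c : X → X → α) : Prop :=
  ∀ (g : G) (x y : X), c (g • x) (g • y) = c x y

theorem InvariantColoring.of_imp {r : X → X → Prop}
    (h : ∀ (g : G) (x y : X), r x y → r (g • x) (g • y)) : InvariantColoring G r :=
  fun g x y => propext ⟨fun hg => by simpa using h g⁻¹ _ _ hg, h g x y⟩

theorem setoid_eq_bot_or_eq_top_of_invariant [IsPreprimitive G X] {r : Setoid X}
    (hr : InvariantColoring G r) : r = ⊥ ∨ r = ⊤ := by
  have hblock (x : X) : IsBlock G {y | r y x} := by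
    refine isBlock_iff_smul_eq_of_nonempty.2 fun g ⟨z, ⟨y, hy, hyz⟩, hz⟩ => ?_
    subst hyz
    have hgx : r (g • x) x := r.trans (r.symm ((hr g y x).mpr hy)) hz
    ext w
    have hw : r (g⁻¹ • w) x = r w (g • x) := by rw [← hr g, smul_inv_smul]
    simp only [Set.mem_smul_set_iff_inv_smul_mem, Set.mem_ofPred_eq, hw]
    exact ⟨fun h => r.trans h hgx, fun h => r.trans h (r.symm hgx)⟩
  by_cases h : ∀ x, {y | r y x}.Subsingleton
  · exact .inl (eq_bot_iff.2 fun x y hxy => h y hxy (r.refl y))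
  · push Not at h
    obtain ⟨x, hx⟩ := h
    have huniv := (hblock x).subsingleton_or_eq_univ.resolve_left hx.not_subsingleton
    have hall (y : X) : r y x := huniv.ge (Set.mem_univ y)
    exact .inr (eq_top_iff.2 fun y z _ => r.trans (hall y) (r.symm (hall z)))

theorem isPreprimitive_of_forall_setoid [IsPretransitive G X]
    (h : ∀ r : Setoid X, InvariantColoring G r → r = ⊥ ∨ r = ⊤) : IsPreprimitive G X := by
  refine ⟨fun {B} hB => ?_⟩
  let r : Setoid X := Setoid.ker fun (x : X) (g : G) => x ∈ g • B
  have hr (x y : X) : r x y ↔ ∀ g : G, x ∈ g • B ↔ y ∈ g • B := by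
    simp [r, Setoid.ker_def, funext_iff]
  have hinv : InvariantColoring G r := .of_imp fun g x y hxy => (hr _ _).2 fun k => by
    simpa only [Set.mem_smul_set_iff_inv_smul_mem, mul_inv_rev, inv_inv, mul_smul]
      using (hr _ _).1 hxy (g⁻¹ * k)
  rcases h r hinv with hbot | htop
  · refine .inl fun x hx y hy => ?_
    suffices r x y by rwa [hbot] at this
    refine (hr x y).2 fun g => ?_
    have hmem {z : X} (hz : z ∈ B) (hzg : z ∈ g • B) : g • B = B :=
      isBlock_iff_smul_eq_of_nonempty.1 hB ⟨z, hzg, hz⟩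
    exact ⟨fun h => (hmem hx h).symm ▸ hy, fun h => (hmem hy h).symm ▸ hx⟩
  · obtain rfl | ⟨x, hx⟩ := B.eq_empty_or_nonempty
    · exact .inl Set.subsingleton_empty
    · refine .inr (Set.eq_univ_of_forall fun y => ?_)
      have hxy : r x y := htop ▸ trivial
      simpa [hx] using (hr x y).1 hxy 1

/-- The points `z` that distinguish `x` from `y`, in the sense that `c x z ≠ c y z`. -/
def differences (c : X → X → α) (x y : X) : Set X := {z | c x z ≠ c y z}

theorem differences_comm (c : X → X → α) (x y : X) : differences c x y = differences c y x :=
  Set.ext fun _ => ne_comm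

theorem differences_smul (hc : InvariantColoring G c) (g : G) (x y : X) :
    differences c (g • x) (g • y) = (g • ·) '' differences c x y := by
  ext z
  constructor
  · intro hz
    refine ⟨g⁻¹ • z, ?_, smul_inv_smul g z⟩
    rwa [differences, Set.mem_ofPred_eq, ← hc g, ← hc g y, smul_inv_smul]
  · rintro ⟨w, hw, rfl⟩
    rwa [differences, Set.mem_ofPred_eq, hc, hc]

theorem differences_infinite_or_finite [IsPreprimitive G X] (hc : InvariantColoring G c) :
    (∀ x y, x ≠ y → (differences c x y).Infinite) ∨ ∀ x y, (differences c x y).Finite := by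
  have hinv : InvariantColoring G ((Filter.germSetoid Filter.cofinite α).comap c) :=
    .of_imp fun g x y (hxy : (differences c x y).Finite) =>
      show (differences c (g • x) (g • y)).Finite from differences_smul hc g x y ▸ hxy.image _
  rcases setoid_eq_bot_or_eq_top_of_invariant hinv with h | h
  · exact .inl fun x y hne hfin => hne ((Setoid.ext_iff.1 h x y).1 hfin)
  · exact .inr fun x y => (Setoid.ext_iff.1 h x y).2 trivial

/-- Every finite set is fixed pointwise by the setwise stabiliser of some finite set. -/
def LocallyRigid (G X : Type*) [Group G] [MulAction G X] : Prop :=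
  ∀ A : Finset X, ∃ B : Finset X, stabilizer G (B : Set X) ≤ fixingSubgroup G (A : Set X)

end Primitivity

/-- Each step strictly decreases the finite number of restrictions to `A` of members of `𝓕 B`. -/
theorem exists_forall_fix_of_descent {X : Type*} {𝓕 : Finset X → Set (X → X)}
    {Q : Finset X → Prop} {A : Finset X} (hQ : ∃ B, Q B)
    (hmaps : ∀ B, Q B → ∀ f ∈ 𝓕 B, ∀ a ∈ A, f a ∈ B)
    (step : ∀ B, Q B → ∀ f ∈ 𝓕 B, ∀ a ∈ A, f a ≠ a →
      ∃ B', Q B' ∧ ∀ f' ∈ 𝓕 B', f' a ≠ f a ∧ ∃ h ∈ 𝓕 B, Set.EqOn h f' A) :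
    ∃ B, ∀ f ∈ 𝓕 B, ∀ a ∈ A, f a = a := by
  have hfin (B : Finset X) (hB : Q B) : (A.restrict '' 𝓕 B).Finite := by
    refine (Set.Finite.pi' fun _ : A => B.finite_toSet).subset ?_
    rintro _ ⟨f, hf, rfl⟩ a
    exact hmaps B hB f hf a a.2
  obtain ⟨B, hmin⟩ :=
    exists_minimalFor_of_wellFoundedLT Q (fun B => (A.restrict '' 𝓕 B).ncard) hQ
  refine ⟨B, fun f hf a ha => of_not_not fun hne => ?_⟩
  obtain ⟨B', hB', h⟩ := step B hmin.prop f hf a ha hne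
  refine hmin.not_lt hB' (Set.ncard_lt_ncard ⟨?_, fun hsub => ?_⟩ (hfin B hmin.prop))
  · rintro _ ⟨f', hf', rfl⟩
    obtain ⟨g, hg, hgf⟩ := (h f' hf').2
    exact ⟨g, hg, funext fun x => hgf x.2⟩
  · obtain ⟨f', hf', hff'⟩ := hsub ⟨f, hf, rfl⟩
    exact (h f' hf').1 (congrFun hff' ⟨a, ha⟩)

section Ramsey

variable {X α : Type*} [Finite α] {S : Set X}

theorem exists_eventually_eq_of_finite {U : Ultrafilter X} (f : X → α) : ∃ e, ∀ᶠ x in U, f x = e :=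
  (U.map f).eq_pure_of_finite.imp fun e he => by
    have : {e} ∈ U.map f := he ▸ Filter.singleton_mem_pure
    exact this

theorem exists_monochromatic_seq (c : X → X → α) (hS : S.Infinite) :
    ∃ (u : ℕ → X) (e : α), Function.Injective u ∧ (∀ i, u i ∈ S) ∧
      ∀ i j, i < j → c (u i) (u j) = e := by
  have := hS.cofinite_inf_principal_neBot
  let U : Ultrafilter X := .of (Filter.cofinite ⊓ Filter.principal S)
  have hU : (U : Filter X) ≤ Filter.cofinite ⊓ Filter.principal S := Ultrafilter.of_le _
  have hUS : ∀ᶠ y in U, y ∈ S := hU (Filter.mem_inf_of_right (Filter.mem_principal_self S))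
  have hne (x : X) : ∀ᶠ y in U, x ≠ y := by
    filter_upwards [hU (Filter.mem_inf_of_left (Set.finite_singleton x).compl_mem_cofinite)]
      with y hy using Ne.symm hy
  choose color hcolor using fun x => exists_eventually_eq_of_finite (U := U) (c x)
  obtain ⟨e, he⟩ := exists_eventually_eq_of_finite (U := U) color
  obtain ⟨u, hu, hlt⟩ := exists_seq_of_forall_finset_exists
    (fun y => y ∈ S ∧ color y = e) (fun x y => x ≠ y ∧ c x y = color x) fun s _ => by
      have hs : ∀ᶠ y in U, ∀ x ∈ s, x ≠ y ∧ c x y = color x :=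
        (Filter.eventually_all_finset s).2 fun x _ =>
          .and (hne x) (hcolor x)
      exact ((hUS.and he).and hs).exists
  exact ⟨u, e, .of_lt_imp_ne fun i j hij => (hlt i j hij).1, fun i => (hu i).1,
    fun i j hij => (hlt i j hij).2.trans (hu i).2⟩

theorem exists_infinite_subset_forall_eq (c : X → X → α) (B : Finset X) (hS : S.Infinite) :
    ∃ T ⊆ S, T.Infinite ∧ ∀ b ∈ B, ∀ x ∈ T, ∀ y ∈ T, c b x = c b y := by
  have := hS.to_subtype
  obtain ⟨p, hp⟩ := Finite.exists_infinite_fiber fun (x : S) (b : B) => c b x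
  refine ⟨_, Subtype.coe_image_subset S _, Set.Infinite.image Subtype.val_injective.injOn
    (Set.infinite_coe_iff.1 hp), ?_⟩
  rintro b hb _ ⟨x, hx, rfl⟩ _ ⟨y, hy, rfl⟩
  exact (congrFun hx ⟨b, hb⟩).trans (congrFun hy ⟨b, hb⟩).symm

end Ramsey

section InducedAut

variable {X α : Type*} {c : X → X → α} {B : Finset X} {f : X → X}

/-- The self-maps of `X` that restrict to automorphisms of the colouring induced on `B`. -/
def inducedAut (c : X → X → α) (B : Finset X) : Set (X → X) :=
  {f | Set.MapsTo f B B ∧ Set.InjOn f B ∧ ∀ x ∈ B, ∀ y ∈ B, c (f x) (f y) = c x y}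

theorem surjOn_of_mem_inducedAut (hf : f ∈ inducedAut c B) : Set.SurjOn f B B :=
  Finset.surjOn_of_injOn_of_card_le f hf.1 hf.2.1 le_rfl

theorem exists_mem_map_mem_of_card_lt [DecidableEq X] {B K : Finset X} (hcard : B.card < K.card)
    (hmaps : Set.MapsTo f (B ∪ K : Finset X) (B ∪ K : Finset X))
    (hinj : Set.InjOn f (B ∪ K : Finset X)) : ∃ k ∈ K, f k ∈ K := by
  by_contra! h
  refine hcard.not_ge (Finset.card_le_card_of_injOn f (fun k hk => ?_) (hinj.mono (by simp)))
  exact (Finset.mem_union.1 (hmaps (Finset.mem_union_right B hk))).resolve_right (h k hk)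

open Classical in
theorem card_filter_rel_map {r : X → X → Prop} (hf : f ∈ inducedAut r B) {x : X} (hx : x ∈ B) :
    {w ∈ B | r (f x) w}.card = {w ∈ B | r x w}.card := by
  refine (Finset.card_nbij f (fun w hw => ?_) (hf.2.1.mono fun w hw => ?_) fun w hw => ?_).symm
  · obtain ⟨hw, hxw⟩ := Finset.mem_filter.1 hw
    exact Finset.mem_filter.2 ⟨hf.1 hw, (hf.2.2 x hx w hw).mpr hxw⟩
  · exact (Finset.mem_filter.1 hw).1
  · obtain ⟨hw, hxw⟩ := Finset.mem_filter.1 hw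
    obtain ⟨v, hv, rfl⟩ := surjOn_of_mem_inducedAut hf hw
    exact ⟨v, Finset.mem_filter.2 ⟨hv, (hf.2.2 x hx v hv).mp hxw⟩, rfl⟩

theorem mem_inducedAut_of_subset {C : Finset X} (hCB : C ⊆ B) (hf : f ∈ inducedAut c B)
    (hmaps : Set.MapsTo f C C) : f ∈ inducedAut c C :=
  ⟨hmaps, hf.2.1.mono hCB, fun x hx y hy => hf.2.2 x (hCB hx) y (hCB hy)⟩

theorem mem_inducedAut_left_of_fix [DecidableEq X] {K : Finset X} (hf : f ∈ inducedAut c (B ∪ K))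
    (hfix : ∀ k ∈ K, f k = k) : f ∈ inducedAut c B := by
  refine mem_inducedAut_of_subset Finset.subset_union_left hf fun x hx => ?_
  have hx' : x ∈ B ∪ K := Finset.mem_union_left K hx
  rcases Finset.mem_union.1 (hf.1 hx') with hfx | hfx
  · exact hfx
  · have : f x = x := hf.2.1 (Finset.mem_union_right B hfx) hx' (hfix _ hfx)
    rwa [this]

theorem color_map_eq_of_fix [DecidableEq X] {K : Finset X} (hf : f ∈ inducedAut c (B ∪ K))
    (hfix : ∀ k ∈ K, f k = k) {x k : X} (hx : x ∈ B) (hk : k ∈ K) : c (f x) k = c x k := by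
  rw [← hf.2.2 x (Finset.mem_union_left K hx) k (Finset.mem_union_right B hk), hfix k hk]

theorem piecewise_id_mem_inducedAut [DecidableEq X] (hc : ∀ x y, c x y = c y x) {C : Finset X}
    (hf : f ∈ inducedAut c (B \ C))
    (hcross : ∀ x ∈ C, ∀ y ∈ B \ C, c x (f y) = c x y) : C.piecewise id f ∈ inducedAut c B := by
  have hdiff {x : X} (hx : x ∈ B) (hxC : x ∉ C) : x ∈ B \ C := Finset.mem_sdiff.2 ⟨hx, hxC⟩
  have hmaps {x : X} (hx : x ∈ B) (hxC : x ∉ C) : f x ∈ B ∧ f x ∉ C :=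
    Finset.mem_sdiff.1 (hf.1 (hdiff hx hxC))
  refine ⟨fun x hx => ?_, fun x hx y hy hxy => ?_, fun x hx y hy => ?_⟩
  · by_cases hxC : x ∈ C
    · simpa [hxC] using hx
    · simpa [hxC] using (hmaps hx hxC).1
  · by_cases hxC : x ∈ C <;> by_cases hyC : y ∈ C <;>
      simp only [hxC, hyC, Finset.piecewise_eq_of_mem, Finset.piecewise_eq_of_notMem, id,
        not_false_eq_true] at hxy
    · exact hxy
    · exact absurd (hxy ▸ hxC) (hmaps hy hyC).2
    · exact absurd (hxy ▸ hyC) (hmaps hx hxC).2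
    · exact hf.2.1 (hdiff hx hxC) (hdiff hy hyC) hxy
  · by_cases hxC : x ∈ C <;> by_cases hyC : y ∈ C <;>
      simp only [hxC, hyC, Finset.piecewise_eq_of_mem, Finset.piecewise_eq_of_notMem, id,
        not_false_eq_true]
    · exact hcross x hxC y (hdiff hy hyC)
    · rw [hc (f x), hc x, hcross y hyC x (hdiff hx hxC)]
    · exact hf.2.2 x (hdiff hx hxC) y (hdiff hy hyC)

theorem locallyRigid_of_inducedAut {G : Type*} [Group G] [MulAction G X]
    (hc : InvariantColoring G c)
    (h : ∀ A : Finset X, ∃ B, ∀ f ∈ inducedAut c B, ∀ a ∈ A, f a = a) : LocallyRigid G X := by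
  intro A
  obtain ⟨B, hB⟩ := h A
  refine ⟨B, fun g hg => (mem_fixingSubgroup_iff G).2 fun a ha => hB (g • ·) ⟨fun x hx => ?_,
    (MulAction.injective g).injOn, fun x _ y _ => hc g x y⟩ a ha⟩
  exact (mem_stabilizer_set' B.finite_toSet).1 hg hx

end InducedAut

section Twins

variable {X α : Type*} {c : X → X → α} {B : Finset X} {x y z : X}

/-- Two points are twins over `B` if no third point of `B` distinguishes them. -/
def Twin (c : X → X → α) (B : Finset X) (x y : X) : Prop :=
  ∀ w ∈ B, w ≠ x → w ≠ y → c x w = c y w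

theorem Twin.symm (h : Twin c B x y) : Twin c B y x :=
  fun w hw hwy hwx => (h w hw hwx hwy).symm

theorem Twin.mono {B' : Finset X} (h : Twin c B' x y) (hB : B ⊆ B') : Twin c B x y :=
  fun w hw => h w (hB hw)

theorem Twin.trans (hc : ∀ x y, c x y = c y x) (hx : x ∈ B) (hz : z ∈ B) (hxy : Twin c B x y)
    (hyz : Twin c B y z) : Twin c B x z := by
  intro w hw hwx hwz
  by_cases hwy : w = y
  · subst hwy
    by_cases hxz : x = z
    · rw [hxz]
    · calc c x w = c z x := by rw [hc x w, hyz x hx (Ne.symm hwx) hxz]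
        _ = c z w := by rw [hc z x, hxy z hz (Ne.symm hxz) (Ne.symm hwz), hc w z]
  · exact (hxy w hw hwx hwy).trans (hyz w hw hwy hwz)

theorem Twin.of_map {f : X → X} (hf : f ∈ inducedAut c B) (hx : x ∈ B) (hy : y ∈ B)
    (h : Twin c B (f x) (f y)) : Twin c B x y := by
  intro w hw hwx hwy
  rw [← hf.2.2 x hx w hw, ← hf.2.2 y hy w hw]
  exact h _ (hf.1 hw) (hf.2.1.ne hw hx hwx) (hf.2.1.ne hw hy hwy)

theorem exists_twin_finset [DecidableEq X] [Finite α] (hc : ∀ x y, c x y = c y x) {S : Set X}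
    (hS : S.Infinite) (B : Finset X) : ∃ K : Finset X, B.card < K.card ∧ ↑K ⊆ S ∧
      ∀ x ∈ K, ∀ y ∈ K, Twin c (B ∪ K) x y := by
  obtain ⟨T, hTS, hT, hTB⟩ := exists_infinite_subset_forall_eq c B hS
  obtain ⟨u, e, hu, huT, he⟩ := exists_monochromatic_seq c hT
  have hne {i j : ℕ} (hij : u i ≠ u j) : c (u j) (u i) = e := by
    rcases lt_or_gt_of_ne (ne_of_apply_ne u hij) with h | h
    · rw [hc, he i j h]
    · exact he j i h
  refine ⟨(Finset.range (B.card + 1)).map ⟨u, hu⟩, by simp, ?_, ?_⟩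
  · rintro _ hx
    obtain ⟨i, -, rfl⟩ := Finset.mem_map.1 hx
    exact hTS (huT i)
  · intro x hx y hy w hw hwx hwy
    obtain ⟨i, -, rfl⟩ := Finset.mem_map.1 hx
    obtain ⟨j, -, rfl⟩ := Finset.mem_map.1 hy
    rcases Finset.mem_union.1 hw with hw | hw
    · rw [hc, hc _ w]
      exact hTB w hw _ (huT i) _ (huT j)
    · obtain ⟨l, -, rfl⟩ := Finset.mem_map.1 hw
      exact (hne hwx).trans (hne hwy).symm

/-- Some `k ∈ K` is mapped into `K`; replacing `f` by the identity on the twin class of `k`, which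
contains `K`, gives `h`. -/
theorem exists_inducedAut_fixing_twins [DecidableEq X] (hc : ∀ x y, c x y = c y x)
    {A K : Finset X} (hcard : B.card < K.card) (hK : ∀ x ∈ K, ∀ y ∈ K, Twin c (B ∪ K) x y)
    {f : X → X} (hf : f ∈ inducedAut c (B ∪ K)) (hA : ∀ a ∈ A, ∀ k ∈ K, ¬ Twin c (B ∪ K) a k) :
    ∃ h ∈ inducedAut c (B ∪ K), (∀ k ∈ K, h k = k) ∧ Set.EqOn h f A := by
  classical
  obtain ⟨k, hk, hfk⟩ := exists_mem_map_mem_of_card_lt hcard hf.1 hf.2.1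
  have hKB {x : X} (hx : x ∈ K) : x ∈ B ∪ K := Finset.mem_union_right B hx
  let C := {x ∈ B ∪ K | Twin c (B ∪ K) k x}
  have hKC {x : X} (hx : x ∈ K) : x ∈ C := Finset.mem_filter.2 ⟨hKB hx, hK k hk x hx⟩
  have hCk {x : X} (hx : x ∈ C) : Twin c (B ∪ K) k x := (Finset.mem_filter.1 hx).2
  have hCfk {x : X} (hx : x ∈ C) : Twin c (B ∪ K) (f k) x :=
    (hK _ hfk k hk).trans hc (hKB hfk) (Finset.mem_filter.1 hx).1 (hCk hx)
  have hmaps : Set.MapsTo f ↑((B ∪ K) \ C) ↑((B ∪ K) \ C) := by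
    intro y hy
    obtain ⟨hy, hyC⟩ := Finset.mem_sdiff.1 hy
    refine Finset.mem_sdiff.2 ⟨hf.1 hy, fun hfy => hyC ?_⟩
    exact Finset.mem_filter.2 ⟨hy, .of_map hf (hKB hk) hy (hCfk hfy)⟩
  have hcross : ∀ x ∈ C, ∀ y ∈ (B ∪ K) \ C, c x (f y) = c x y := by
    intro x hx y hy
    have hfy := Finset.mem_sdiff.1 (hmaps hy)
    have hy := Finset.mem_sdiff.1 hy
    have hne {z w : X} (hz : z ∉ C) (hw : w ∈ C) : z ≠ w := fun h => hz (h ▸ hw)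
    calc c x (f y) = c (f k) (f y) := (hCfk hx _ hfy.1 (hne hfy.2 (hKC hfk)) (hne hfy.2 hx)).symm
      _ = c k y := hf.2.2 k (hKB hk) y hy.1
      _ = c x y := hCk hx y hy.1 (hne hy.2 (hKC hk)) (hne hy.2 hx)
  refine ⟨C.piecewise id f, piecewise_id_mem_inducedAut hc
    (mem_inducedAut_of_subset Finset.sdiff_subset hf hmaps) hcross,
    fun x hx => C.piecewise_eq_of_mem _ _ (hKC hx),
    fun a ha => C.piecewise_eq_of_notMem _ _ fun haC => hA a ha k hk (hCk haC).symm⟩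

theorem exists_inducedAut_preserving_color_of_twins [DecidableEq X] (hc : ∀ x y, c x y = c y x)
    {A K : Finset X} (hcard : B.card < K.card) (hK : ∀ x ∈ K, ∀ y ∈ K, Twin c (B ∪ K) x y)
    {f : X → X} (hf : f ∈ inducedAut c (B ∪ K)) (hA : ∀ a ∈ A, ∀ k ∈ K, ¬ Twin c (B ∪ K) a k) :
    ∃ h ∈ inducedAut c B, (∀ k ∈ K, ∀ x ∈ B, c (h x) k = c x k) ∧ Set.EqOn h f A := by
  obtain ⟨h, hh, hfix, hhf⟩ := exists_inducedAut_fixing_twins hc hcard hK hf hA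
  exact ⟨h, mem_inducedAut_left_of_fix hh hfix,
    fun k hk x hx => color_map_eq_of_fix hh hfix hx hk, hhf⟩

end Twins

section Limits

variable {X α : Type*} {c : X → X → α} {A B : Finset X} {a d : X} {e : α}

/-- Over every finite set `F` there are infinitely many points `u` with `c a u = e` that cannot be
told apart from `a` by means of `F`. -/
def IsLimit (c : X → X → α) (a : X) (e : α) : Prop :=
  ∀ F : Finset X, ∃ u ∉ F, c a u = e ∧ ∀ x ∈ F, x ≠ a → c x u = c x a

theorem IsLimit.smul {G : Type*} [Group G] [MulAction G X] (h : IsLimit c a e)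
    (hinv : InvariantColoring G c) (g : G) : IsLimit c (g • a) e := by
  classical
  intro F
  obtain ⟨u, hu, hau, hFu⟩ := h (g⁻¹ • F)
  refine ⟨g • u, fun hgu => hu ?_, by rw [hinv, hau], fun x hx hxa => ?_⟩
  · simpa using Finset.smul_mem_smul_finset (a := g⁻¹) hgu
  · have := hFu (g⁻¹ • x) (Finset.smul_mem_smul_finset hx) (by rwa [Ne, inv_smul_eq_iff])
    rwa [← hinv g, ← hinv g _ a, smul_inv_smul] at this

/-- The points outside `B` that no point of `B` other than `d` itself distinguishes from `d`. -/
def clones (c : X → X → α) (B : Finset X) (d : X) : Set X :=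
  {u | u ∉ B ∧ ∀ x ∈ B, x ≠ d → c x u = c x d}

theorem IsLimit.infinite_clones (h : IsLimit c d e) (B : Finset X) : (clones c B d).Infinite := by
  classical
  intro hfin
  obtain ⟨u, hu, -, hBu⟩ := h (B ∪ hfin.toFinset)
  simp only [Finset.mem_union, Set.Finite.mem_toFinset, not_or] at hu
  exact hu.2 ⟨hu.1, fun x hx => hBu x (Finset.mem_union_left _ hx)⟩

/-- Any two points of `A ⊆ B` are distinguished by a point of `B` outside `A`. -/
def Separates (c : X → X → α) (A B : Finset X) : Prop :=
  A ⊆ B ∧ (A : Set X).Pairwise fun x y => ∃ z ∈ B, z ∉ A ∧ c x z ≠ c y z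

theorem Separates.mono {B' : Finset X} (h : Separates c A B) (hB : B ⊆ B') : Separates c A B' :=
  ⟨h.1.trans hB, h.2.mono' fun _ _ ⟨z, hz, hzA⟩ => ⟨z, hB hz, hzA⟩⟩

theorem Separates.not_twin (h : Separates c A B) {x y : X} (hx : x ∈ A) (hy : y ∈ A)
    (hxy : x ≠ y) : ¬ Twin c B x y := by
  obtain ⟨z, hz, hzA, hne⟩ := h.2 hx hy hxy
  exact fun ht => hne (ht z hz (ne_of_mem_of_not_mem hx hzA).symm
    (ne_of_mem_of_not_mem hy hzA).symm)

theorem exists_separates (hinf : ∀ x y, x ≠ y → (differences c x y).Infinite) (A : Finset X) :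
    ∃ B, Separates c A B := by
  classical
  choose z hz hzA using fun p : A.offDiag =>
    (hinf p.1.1 p.1.2 (Finset.mem_offDiag.1 p.2).2.2).exists_notMem_finset A
  refine ⟨A ∪ Finset.univ.image z, Finset.subset_union_left, fun x hx y hy hxy => ?_⟩
  let p : A.offDiag := ⟨(x, y), Finset.mem_offDiag.2 ⟨hx, hy, hxy⟩⟩
  exact ⟨z p, Finset.mem_union_right _ (Finset.mem_image_of_mem z (Finset.mem_univ p)),
    hzA p, hz p⟩

/-- No point of `A` has a twin over `B` that lies in `B`. -/
def TwinFree (c : X → X → α) (A B : Finset X) : Prop :=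
  ∀ a ∈ A, ∀ y ∈ B, y ≠ a → ¬ Twin c B a y

open Classical in
/-- The pairs consisting of a point of `A` and one of its twins over `B` in `B`, which measure how
far `B` is from being twin-free. -/
noncomputable def twinPairs (c : X → X → α) (A B : Finset X) : Finset (X × X) :=
  {p ∈ A ×ˢ B | p.2 ≠ p.1 ∧ Twin c B p.1 p.2}

theorem mem_twinPairs {x y : X} :
    (x, y) ∈ twinPairs c A B ↔ x ∈ A ∧ y ∈ B ∧ y ≠ x ∧ Twin c B x y := by
  simp [twinPairs, and_assoc]

theorem mem_erase_twinPairs_of_mem_insert [DecidableEq X] {x y z : X} (ha : a ∈ B) (hd : d ∈ B)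
    (hz : z ∉ B) (hne : c a z ≠ c d z) (hxy : (x, y) ∈ twinPairs c A (insert z B)) (hyz : y ≠ z) :
    (x, y) ∈ (twinPairs c A B).erase (a, d) := by
  obtain ⟨hx, hy, hyx, ht⟩ := mem_twinPairs.1 hxy
  refine Finset.mem_erase.2 ⟨fun h => hne ?_, mem_twinPairs.2
    ⟨hx, Finset.mem_of_mem_insert_of_ne hy hyz, hyx, ht.mono (Finset.subset_insert z B)⟩⟩
  obtain ⟨rfl, rfl⟩ := Prod.mk.inj h
  exact ht z (Finset.mem_insert_self z B) (ne_of_mem_of_not_mem ha hz).symm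
    (ne_of_mem_of_not_mem hd hz).symm

theorem eq_of_twin_insert [DecidableEq X] (hc : ∀ x y, c x y = c y x) (hsep : Separates c A B)
    (had : (a, d) ∈ twinPairs c A B) {z x : X} (hz : z ∉ B) (hne : c a z ≠ c d z) (hx : x ∈ A)
    (ht : Twin c (insert z B) x z) : x = a := by
  obtain ⟨ha, hd, hda, htad⟩ := mem_twinPairs.1 had
  have hdA : d ∉ A := fun hdA => hsep.not_twin ha hdA hda.symm htad
  have hxd : x ≠ d := ne_of_mem_of_not_mem hx hdA
  by_contra hxa
  have hBz {w : X} (hw : w ∈ B) : w ∈ insert z B ∧ w ≠ z :=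
    ⟨Finset.mem_insert_of_mem hw, ne_of_mem_of_not_mem hw hz⟩
  have haz := hBz (hsep.1 ha)
  have hdz := hBz hd
  refine hne ?_
  calc c a z = c x a := by rw [hc, ht a haz.1 (Ne.symm hxa) haz.2]
    _ = c x d := by rw [hc, htad x (hsep.1 hx) hxa hxd, hc]
    _ = c d z := by rw [ht d hdz.1 hxd.symm hdz.2, hc]

theorem twinPairs_insert_subset [DecidableEq X] (hc : ∀ x y, c x y = c y x)
    (hsep : Separates c A B) (had : (a, d) ∈ twinPairs c A B) {z : X} (hz : z ∉ B)
    (hne : c a z ≠ c d z) :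
    twinPairs c A (insert z B) ⊆ insert (a, z) ((twinPairs c A B).erase (a, d)) := by
  obtain ⟨ha, hd, -⟩ := mem_twinPairs.1 had
  rintro ⟨x, y⟩ hxy
  by_cases hyz : y = z
  · subst hyz
    obtain ⟨hx, -, -, ht⟩ := mem_twinPairs.1 hxy
    rw [eq_of_twin_insert hc hsep had hz hne hx ht]
    exact Finset.mem_insert_self _ _
  · exact Finset.mem_insert_of_mem
      (mem_erase_twinPairs_of_mem_insert (hsep.1 ha) hd hz hne hxy hyz)

/-- Inserting `z` destroys the twin pair `(a, d)`, so by minimality it creates another one, which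
can only be `(a, z)`. -/
theorem mem_twinPairs_insert_of_minimalFor [DecidableEq X] (hc : ∀ x y, c x y = c y x)
    (hmin : MinimalFor (Separates c A) (fun B => (twinPairs c A B).card) B)
    (had : (a, d) ∈ twinPairs c A B) {z : X} (hz : z ∉ B) (hne : c a z ≠ c d z) :
    (a, z) ∈ twinPairs c A (insert z B) := by
  have hsub := twinPairs_insert_subset hc hmin.prop had hz hne
  by_contra h
  refine hmin.not_lt (hmin.prop.mono (Finset.subset_insert z B)) ?_
  exact (Finset.card_le_card ((Finset.subset_insert_iff_of_notMem h).1 hsub)).trans_lt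
    (Finset.card_erase_lt_of_mem had)

theorem minimalFor_insert_of_minimalFor [DecidableEq X] (hc : ∀ x y, c x y = c y x)
    (hmin : MinimalFor (Separates c A) (fun B => (twinPairs c A B).card) B)
    (had : (a, d) ∈ twinPairs c A B) {z : X} (hz : z ∉ B) (hne : c a z ≠ c d z) :
    MinimalFor (Separates c A) (fun B => (twinPairs c A B).card) (insert z B) := by
  have hcard : (twinPairs c A (insert z B)).card ≤ (twinPairs c A B).card := by
    refine (Finset.card_le_card (twinPairs_insert_subset hc hmin.prop had hz hne)).trans ?_
    exact (Finset.card_insert_le _ _).trans_eq (Finset.card_erase_add_one had)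
  exact ⟨hmin.prop.mono (Finset.subset_insert z B), fun _ hB' _ => hcard.trans (hmin.le hB')⟩

theorem color_eq_of_isLimit_of_minimalFor (hc : ∀ x y, c x y = c y x)
    (hmin : MinimalFor (Separates c A) (fun B => (twinPairs c A B).card) B)
    (had : (a, d) ∈ twinPairs c A B) (hlim : IsLimit c d e) : c a d = e := by
  classical
  obtain ⟨u, hu, hdu, hBu⟩ := hlim B
  obtain ⟨ha, hd, hda, -⟩ := mem_twinPairs.1 had
  have hau : c a u = c a d := hBu a (hmin.prop.1 ha) hda.symm
  by_contra hne
  have ht := (mem_twinPairs.1 (mem_twinPairs_insert_of_minimalFor hc hmin had hu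
    (by rwa [hau, hdu]))).2.2.2
  exact hne (by rw [ht d (Finset.mem_insert_of_mem hd) hda (ne_of_mem_of_not_mem hd hu), hc, hdu])

theorem exists_separates_twinFree (hc : ∀ x y, c x y = c y x)
    (hinf : ∀ x y, x ≠ y → (differences c x y).Infinite) (hlim : ∀ x, IsLimit c x e)
    (A : Finset X) : ∃ B, Separates c A B ∧ TwinFree c A B := by
  classical
  obtain ⟨B, hmin⟩ := exists_minimalFor_of_wellFoundedLT (Separates c A)
    (fun B => (twinPairs c A B).card) (exists_separates hinf A)
  refine ⟨B, hmin.prop, fun a ha d hd hda ht => ?_⟩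
  have had : (a, d) ∈ twinPairs c A B := mem_twinPairs.2 ⟨ha, hd, hda, ht⟩
  obtain ⟨z, hne, hz⟩ := (hinf a d hda.symm).exists_notMem_finset B
  have haz := mem_twinPairs_insert_of_minimalFor hc hmin had hz hne
  have hmin' := minimalFor_insert_of_minimalFor hc hmin had hz hne
  have htz := (mem_twinPairs.1 haz).2.2.2
  refine hne ?_
  calc c a z = e := color_eq_of_isLimit_of_minimalFor hc hmin' haz (hlim z)
    _ = c a d := (color_eq_of_isLimit_of_minimalFor hc hmin had (hlim d)).symm
    _ = c d z := by
      rw [htz d (Finset.mem_insert_of_mem hd) hda (ne_of_mem_of_not_mem hd hz), hc]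

end Limits

section Replacement

variable {X α : Type*} [DecidableEq X] {c : X → X → α} {A B K : Finset X} {d k : X}

theorem Separates.erase_union (hsep : Separates c A B) (hdA : d ∉ A) (hk : k ∈ K)
    (hK : ↑K ⊆ clones c B d) : Separates c A (B.erase d ∪ K) := by
  have hA : A ⊆ B.erase d := Finset.subset_erase.2 ⟨hsep.1, hdA⟩
  refine ⟨hA.trans Finset.subset_union_left, fun x hx y hy hxy => ?_⟩
  obtain ⟨z, hz, hzA, hne⟩ := hsep.2 hx hy hxy
  by_cases hzd : z = d
  · subst hzd
    have hkB := hK hk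
    refine ⟨k, Finset.mem_union_right _ hk, fun hkA => hkB.1 (hsep.1 hkA), ?_⟩
    rwa [hkB.2 x (hsep.1 hx) (ne_of_mem_of_not_mem hx hdA),
      hkB.2 y (hsep.1 hy) (ne_of_mem_of_not_mem hy hdA)]
  · exact ⟨z, Finset.mem_union_left _ (Finset.mem_erase.2 ⟨hzd, hz⟩), hzA, hne⟩

theorem TwinFree.erase_union (hc : ∀ x y, c x y = c y x) (htf : TwinFree c A B) (hAB : A ⊆ B)
    (hd : d ∈ B) (hdA : d ∉ A) (hk : k ∈ K) (hK : ↑K ⊆ clones c B d) :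
    TwinFree c A (B.erase d ∪ K) := by
  intro a ha y hy hya ht
  have had : a ≠ d := ne_of_mem_of_not_mem ha hdA
  have hne {w z : X} (hw : w ∈ B) (hz : z ∈ K) : w ≠ z := ne_of_mem_of_not_mem hw (hK hz).1
  have hB {w : X} (hw : w ∈ B) (hwd : w ≠ d) : w ∈ B.erase d ∪ K :=
    Finset.mem_union_left _ (Finset.mem_erase.2 ⟨hwd, hw⟩)
  rcases Finset.mem_union.1 hy with hy | hy
  · obtain ⟨hyd, hyB⟩ := Finset.mem_erase.1 hy
    refine htf a ha y hyB hya fun w hw hwa hwy => ?_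
    by_cases hwd : w = d
    · subst hwd
      rw [← (hK hk).2 a (hAB ha) had, ← (hK hk).2 y hyB hyd]
      exact ht k (Finset.mem_union_right _ hk) (hne (hAB ha) hk).symm (hne hyB hk).symm
    · exact ht w (hB hw hwd) hwa hwy
  · refine htf a ha d hd had.symm fun w hw hwa hwd => ?_
    rw [hc d, ← (hK hy).2 w hw hwd, hc w]
    exact ht w (hB hw hwd) hwa (hne hw hy)

theorem exists_inducedAut_of_clones (hc : ∀ x y, c x y = c y x) (hA : A ⊆ B.erase d)
    (htf : TwinFree c A (B.erase d ∪ K)) (hcard : (B.erase d).card < K.card)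
    (hK : ↑K ⊆ clones c B d) (htwin : ∀ x ∈ K, ∀ y ∈ K, Twin c (B.erase d ∪ K) x y)
    {f : X → X} (hf : f ∈ inducedAut c (B.erase d ∪ K)) :
    (∀ a ∈ A, f a ≠ d ∧ c (f a) d = c a d) ∧ ∃ h ∈ inducedAut c B, Set.EqOn h f A := by
  have hAK : ∀ a ∈ A, ∀ k ∈ K, ¬ Twin c (B.erase d ∪ K) a k := fun a ha k hk =>
    htf a ha k (Finset.mem_union_right _ hk)
      (ne_of_mem_of_not_mem (Finset.mem_of_mem_erase (hA ha)) (hK hk).1).symm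
  obtain ⟨h, hh, hcol, hhf⟩ :=
    exists_inducedAut_preserving_color_of_twins hc hcard htwin hf hAK
  obtain ⟨k, hk⟩ : K.Nonempty := Finset.card_pos.1 (Nat.zero_lt_of_lt hcard)
  have hkd {x : X} (hx : x ∈ B.erase d) : c x k = c x d :=
    (hK hk).2 x (Finset.mem_of_mem_erase hx) (Finset.ne_of_mem_erase hx)
  have hd {x : X} (hx : x ∈ B.erase d) : c (h x) d = c x d := by
    rw [← hkd hx, ← hkd (hh.1 hx), hcol k hk x hx]
  refine ⟨fun a ha => ?_, ({d} : Finset X).piecewise id h, ?_, fun a ha => ?_⟩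
  · rw [← hhf ha]
    exact ⟨Finset.ne_of_mem_erase (hh.1 (hA ha)), hd (hA ha)⟩
  · rw [Finset.erase_eq] at hh hd
    refine piecewise_id_mem_inducedAut hc hh fun x hx y hy => ?_
    rw [Finset.mem_singleton.1 hx, hc d, hd hy, hc]
  · rw [Finset.piecewise_eq_of_notMem _ _ _ fun had => ?_, hhf ha]
    exact Finset.ne_of_mem_erase (hA ha) (Finset.mem_singleton.1 had)

end Replacement

section SymmetricColorings

variable {X α : Type*} [Finite α] {c : X → X → α}

theorem exists_finset_forall_not_twin (hc : ∀ x y, c x y = c y x)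
    (hinf : ∀ x y, x ≠ y → (differences c x y).Infinite) {a : X} (hlim : ∀ e, ¬ IsLimit c a e) :
    ∃ F : Finset X, ∀ u, u ≠ a → ¬ Twin c F a u := by
  classical
  have := Fintype.ofFinite α
  unfold IsLimit at hlim
  push Not at hlim
  choose F hF using hlim
  let F₁ := Finset.univ.biUnion F
  have hout {u : X} (hu : u ∉ F₁) : ∃ x ∈ F₁, x ≠ a ∧ c x u ≠ c x a := by
    have hsub : F (c a u) ⊆ F₁ := Finset.subset_biUnion_of_mem F (Finset.mem_univ _)
    obtain ⟨x, hx, hxa⟩ := hF (c a u) u (fun h => hu (hsub h)) rfl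
    exact ⟨x, hsub hx, hxa⟩
  choose z hz hz' using fun u : {u // u ≠ a} =>
    (hinf a u u.2.symm).exists_notMem_finset {a, u.1}
  refine ⟨F₁ ∪ (F₁.subtype _).image z, fun u hua ht => ?_⟩
  by_cases hu : u ∈ F₁
  · have hne : z ⟨u, hua⟩ ≠ a ∧ z ⟨u, hua⟩ ≠ u := by simpa using hz' ⟨u, hua⟩
    exact hz ⟨u, hua⟩ (ht _ (Finset.mem_union_right _ (Finset.mem_image_of_mem z
      (Finset.mem_subtype.2 hu))) hne.1 hne.2)
  · obtain ⟨x, hx, hxa, hne⟩ := hout hu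
    refine hne ?_
    rw [hc, hc x a, ht x (Finset.mem_union_left _ hx) hxa (ne_of_mem_of_not_mem hx hu)]

theorem exists_forall_fix_of_forall_not_isLimit (hc : ∀ x y, c x y = c y x)
    (hinf : ∀ x y, x ≠ y → (differences c x y).Infinite) (hlim : ∀ a e, ¬ IsLimit c a e)
    (A : Finset X) : ∃ B, ∀ f ∈ inducedAut c B, ∀ a ∈ A, f a = a := by
  classical
  choose F hF using fun a => exists_finset_forall_not_twin hc hinf (hlim a)
  refine exists_forall_fix_of_descent
    (Q := fun B => A ⊆ B ∧ ∀ a ∈ A, ∀ u, u ≠ a → ¬ Twin c B a u)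
    ⟨A ∪ A.biUnion F, Finset.subset_union_left, fun a ha u hu ht => hF a u hu
      (ht.mono ((Finset.subset_biUnion_of_mem F ha).trans Finset.subset_union_right))⟩
    (fun B hB f hf a ha => hf.1 (hB.1 ha)) ?_
  rintro B ⟨hAB, hB⟩ f - a ha hne
  obtain ⟨K, hcard, hK, htwin⟩ :=
    exists_twin_finset hc ((hinf (f a) a hne).sdiff (Finset.finite_toSet A)) B
  have hB' : ∀ a ∈ A, ∀ u, u ≠ a → ¬ Twin c (B ∪ K) a u := fun a ha u hu ht =>
    hB a ha u hu (ht.mono Finset.subset_union_left)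
  refine ⟨B ∪ K, ⟨hAB.trans Finset.subset_union_left, hB'⟩, fun f' hf' => ?_⟩
  obtain ⟨h, hh, hcol, hhf⟩ := exists_inducedAut_preserving_color_of_twins hc hcard htwin hf'
    fun a ha k hk => hB' a ha k (ne_of_mem_of_not_mem ha (hK hk).2).symm
  refine ⟨fun heq => ?_, h, hh, hhf⟩
  obtain ⟨k, hk⟩ : K.Nonempty := Finset.card_pos.1 (Nat.zero_lt_of_lt hcard)
  refine (hK hk).1 ?_
  rw [← heq, ← hhf ha, hcol k hk a (hAB ha)]

theorem exists_forall_fix_of_forall_isLimit (hc : ∀ x y, c x y = c y x)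
    (hinf : ∀ x y, x ≠ y → (differences c x y).Infinite) {e : α} (hlim : ∀ a, IsLimit c a e)
    (A : Finset X) : ∃ B, ∀ f ∈ inducedAut c B, ∀ a ∈ A, f a = a := by
  classical
  refine exists_forall_fix_of_descent (Q := fun B => Separates c A B ∧ TwinFree c A B)
    (exists_separates_twinFree hc hinf hlim A) (fun B hB f hf a ha => hf.1 (hB.1.1 ha)) ?_
  rintro B ⟨hsep, htf⟩ f hf a ha hne
  obtain ⟨d, hd, hdA, had⟩ : ∃ d ∈ B, d ∉ A ∧ (f a = d ∨ c (f a) d ≠ c a d) := by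
    by_cases hfa : f a ∈ A
    · obtain ⟨d, hd, hdA, hcd⟩ := hsep.2 hfa ha hne
      exact ⟨d, hd, hdA, .inr hcd⟩
    · exact ⟨f a, hf.1 (hsep.1 ha), hfa, .inl rfl⟩
  obtain ⟨K, hcard, hK, htwin⟩ :=
    exists_twin_finset hc ((hlim d).infinite_clones B) (B.erase d)
  obtain ⟨k, hk⟩ : K.Nonempty := Finset.card_pos.1 (Nat.zero_lt_of_lt hcard)
  have htf' := htf.erase_union hc hsep.1 hd hdA hk hK
  refine ⟨B.erase d ∪ K, ⟨hsep.erase_union hdA hk hK, htf'⟩, fun f' hf' => ?_⟩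
  obtain ⟨hf'd, hh⟩ := exists_inducedAut_of_clones hc (Finset.subset_erase.2 ⟨hsep.1, hdA⟩) htf'
    hcard hK htwin hf'
  exact ⟨fun heq => had.elim (heq ▸ (hf'd a ha).1) fun h => h (heq ▸ (hf'd a ha).2), hh⟩

theorem locallyRigid_of_symm_of_infinite {G : Type*} [Group G] [MulAction G X]
    [IsPretransitive G X] (hc : ∀ x y, c x y = c y x) (hinv : InvariantColoring G c)
    (hinf : ∀ x y, x ≠ y → (differences c x y).Infinite) : LocallyRigid G X := by
  refine locallyRigid_of_inducedAut hinv ?_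
  by_cases h : ∃ a e, IsLimit c a e
  · obtain ⟨a, e, hlim⟩ := h
    refine exists_forall_fix_of_forall_isLimit hc hinf (e := e) fun b => ?_
    obtain ⟨g, rfl⟩ := exists_smul_eq G a b
    exact hlim.smul hinv g
  · push Not at h
    exact exists_forall_fix_of_forall_not_isLimit hc hinf h

end SymmetricColorings

section Tournaments

variable {X : Type*} {r : X → X → Prop} [Std.Asymm r] [Std.Trichotomous r] {B K : Finset X}

theorem rel_iff_not_rel_of_ne {x y : X} (hxy : x ≠ y) : r x y ↔ ¬ r y x :=
  ⟨asymm, fun hyx => by_contra fun h => hxy (Std.Trichotomous.trichotomous x y h hyx)⟩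

theorem rel_trans_of_forall_lt_eq {u : ℕ → X} (hu : Function.Injective u) {e : Prop}
    (he : ∀ i j, i < j → r (u i) (u j) = e) {i j k : ℕ} (hij : r (u i) (u j))
    (hjk : r (u j) (u k)) : r (u i) (u k) := by
  by_cases h : e
  · have hlt (i j : ℕ) : r (u i) (u j) ↔ i < j := by
      refine ⟨fun hij => ?_, fun hij => (he i j hij).mpr h⟩
      by_contra! hji
      rcases hji.eq_or_lt with rfl | hji
      · exact asymm hij hij
      · exact asymm hij ((he j i hji).mpr h)
    exact (hlt i k).2 (((hlt i j).1 hij).trans ((hlt j k).1 hjk))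
  · have hlt (i j : ℕ) : r (u i) (u j) ↔ j < i := by
      refine ⟨fun hij => ?_, fun hji => (rel_iff_not_rel_of_ne (hu.ne hji.ne')).2 fun hr =>
        h ((he j i hji).mp hr)⟩
      by_contra! hji
      rcases hji.eq_or_lt with rfl | hji
      · exact asymm hij hij
      · exact h ((he i j hji).mp hij)
    exact (hlt i k).2 (((hlt j k).1 hjk).trans ((hlt i j).1 hij))

theorem exists_transitive_finset (r : X → X → Prop) [Std.Asymm r] [Std.Trichotomous r] {S : Set X}
    (hS : S.Infinite) (B : Finset X) : ∃ K : Finset X, B.card < K.card ∧ ↑K ⊆ S ∧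
      (∀ b ∈ B, ∀ x ∈ K, ∀ y ∈ K, r b x = r b y) ∧
      ∀ x ∈ K, ∀ y ∈ K, ∀ z ∈ K, r x y → r y z → r x z := by
  obtain ⟨T, hTS, hT, hTB⟩ := exists_infinite_subset_forall_eq r B hS
  obtain ⟨u, e, hu, huT, he⟩ := exists_monochromatic_seq r hT
  have hmem {x : X} (hx : x ∈ (Finset.range (B.card + 1)).map ⟨u, hu⟩) : ∃ i, u i = x :=
    (Finset.mem_map.1 hx).imp fun _ => And.right
  refine ⟨(Finset.range (B.card + 1)).map ⟨u, hu⟩, by simp, fun x hx => ?_,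
    fun b hb x hx y hy => ?_, fun x hx y hy z hz => ?_⟩
  · obtain ⟨i, rfl⟩ := hmem hx
    exact hTS (huT i)
  · obtain ⟨⟨i, rfl⟩, ⟨j, rfl⟩⟩ := And.intro (hmem hx) (hmem hy)
    exact hTB b hb _ (huT i) _ (huT j)
  · obtain ⟨⟨i, rfl⟩, ⟨j, rfl⟩, ⟨k, rfl⟩⟩ := And.intro (hmem hx) (And.intro (hmem hy) (hmem hz))
    exact rel_trans_of_forall_lt_eq hu he

open Classical in
theorem card_filter_rel_lt (hB : ∀ b ∈ B, ∀ x ∈ K, ∀ y ∈ K, r b x = r b y)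
    (hK : ∀ x ∈ K, ∀ y ∈ K, ∀ z ∈ K, r x y → r y z → r x z) {x y : X} (hx : x ∈ K) (hy : y ∈ K)
    (hxy : r x y) : {w ∈ B ∪ K | r y w}.card < {w ∈ B ∪ K | r x w}.card := by
  refine Finset.card_lt_card (Finset.ssubset_iff_of_subset (fun w hw => ?_) |>.2
    ⟨y, Finset.mem_filter.2 ⟨Finset.mem_union_right B hy, hxy⟩,
      fun h => asymm (Finset.mem_filter.1 h).2 (Finset.mem_filter.1 h).2⟩)
  obtain ⟨hw, hyw⟩ := Finset.mem_filter.1 hw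
  refine Finset.mem_filter.2 ⟨hw, ?_⟩
  rcases Finset.mem_union.1 hw with hw | hw
  · have hxw : x ≠ w := fun h => asymm (h ▸ hyw) hxy
    exact (rel_iff_not_rel_of_ne hxw).2 fun hwx => asymm hyw ((hB w hw x hx y hy).mp hwx)
  · exact hK x hx y hy w hw hxy hyw

theorem map_eq_self_of_mem_of_map_mem [DecidableEq X]
    (hB : ∀ b ∈ B, ∀ x ∈ K, ∀ y ∈ K, r b x = r b y)
    (hK : ∀ x ∈ K, ∀ y ∈ K, ∀ z ∈ K, r x y → r y z → r x z) {f : X → X}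
    (hf : f ∈ inducedAut r (B ∪ K)) {x : X} (hx : x ∈ K) (hfx : f x ∈ K) : f x = x := by
  classical
  have hcard := card_filter_rel_map hf (Finset.mem_union_right B hx)
  refine (Std.Trichotomous.trichotomous (r := r) x (f x) (fun h => ?_) fun h => ?_).symm
  · exact (card_filter_rel_lt hB hK hx hfx h).ne (by convert hcard)
  · exact (card_filter_rel_lt hB hK hfx hx h).ne' (by convert hcard)

/-- Some `k ∈ K` is fixed. If `f x ≠ x` for some `x ∈ K`, then `f x` and the preimage of `x` both
lie in `B` and relate to `k`, hence to `x`, in the same way; but `f` maps `(f⁻¹ x, x)` to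
`(x, f x)`. -/
theorem map_eq_self_of_mem [DecidableEq X] (hcard : B.card < K.card)
    (hB : ∀ b ∈ B, ∀ x ∈ K, ∀ y ∈ K, r b x = r b y)
    (hK : ∀ x ∈ K, ∀ y ∈ K, ∀ z ∈ K, r x y → r y z → r x z) {f : X → X}
    (hf : f ∈ inducedAut r (B ∪ K)) {x : X} (hx : x ∈ K) : f x = x := by
  have hfix {x : X} (hx : x ∈ K) (hfx : f x ∈ K) : f x = x :=
    map_eq_self_of_mem_of_map_mem hB hK hf hx hfx
  obtain ⟨k, hk, hfk⟩ := exists_mem_map_mem_of_card_lt hcard hf.1 hf.2.1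
  have hfk : f k = k := hfix hk hfk
  by_contra hne
  have hright {y : X} (hy : y ∈ K) : y ∈ B ∪ K := Finset.mem_union_right B hy
  obtain ⟨w, hwBK, rfl⟩ := surjOn_of_mem_inducedAut hf (hright hx)
  have hw : w ∉ K := fun hw => hne (congrArg f (hfix hw hx))
  have hffw : f (f w) ∉ K := fun h => hne (hfix hx h)
  have hwB : w ∈ B := (Finset.mem_union.1 hwBK).resolve_right hw
  have hffwB : f (f w) ∈ B := (Finset.mem_union.1 (hf.1 (hright hx))).resolve_right hffw
  have hkw : r k w = r k (f w) := by rw [← hf.2.2 k (hright hk) w hwBK, hfk]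
  have hkfw : r k (f (f w)) = r k (f w) := by rw [← hf.2.2 k (hright hk) _ (hright hx), hfk]
  have hflip {b : X} (hb : b ∈ B) (hbK : b ∉ K) : r b (f w) ↔ ¬ r k b := by
    rw [hB b hb _ hx k hk]
    exact rel_iff_not_rel_of_ne (ne_of_mem_of_not_mem hk hbK).symm
  have hiff : r (f w) (f (f w)) ↔ ¬ r (f (f w)) (f w) := rel_iff_not_rel_of_ne (Ne.symm hne)
  rw [hf.2.2 w hwBK _ (hright hx), hflip hwB hw, hflip hffwB hffw, hkw, hkfw] at hiff
  exact iff_not_self hiff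

theorem locallyRigid_of_tournament_of_infinite {G : Type*} [Group G] [MulAction G X]
    (hinv : InvariantColoring G r) (hinf : ∀ x y, x ≠ y → (differences r x y).Infinite) :
    LocallyRigid G X := by
  classical
  refine locallyRigid_of_inducedAut hinv fun A => exists_forall_fix_of_descent
    (Q := fun B => A ⊆ B) ⟨A, subset_rfl⟩ (fun B hB f hf a ha => hf.1 (hB ha)) ?_
  intro B hAB f _ a ha hne
  obtain ⟨K, hcard, hKS, hBK, hK⟩ := exists_transitive_finset r (hinf (f a) a hne) B
  refine ⟨B ∪ K, hAB.trans Finset.subset_union_left, fun f' hf' => ?_⟩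
  have hfix (k : X) (hk : k ∈ K) : f' k = k := map_eq_self_of_mem hcard hBK hK hf' hk
  obtain ⟨k, hk⟩ : K.Nonempty := Finset.card_pos.1 (Nat.zero_lt_of_lt hcard)
  refine ⟨fun heq => hKS hk ?_, f', mem_inducedAut_left_of_fix hf' hfix, Set.eqOn_refl f' A⟩
  rw [← heq, color_map_eq_of_fix hf' hfix (hAB ha) hk]

end Tournaments

section LocallyFinite

variable {X G : Type*} [Group G] [MulAction G X] {Γ : SimpleGraph X}

theorem exists_adj_dist_lt (hconn : Γ.Connected) {x z : X} (h : x ≠ z) :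
    ∃ y, Γ.Adj x y ∧ Γ.dist y z < Γ.dist x z := by
  obtain ⟨p, hp⟩ := (hconn x z).exists_walk_length_eq_dist
  cases p with
  | nil => exact absurd rfl h
  | cons hadj q =>
    rw [SimpleGraph.Walk.length_cons] at hp
    exact ⟨_, hadj, (Nat.lt_succ_of_le (SimpleGraph.dist_le q)).trans_eq hp⟩

theorem finite_setOf_dist_le (hconn : Γ.Connected) (hfin : ∀ x, (Γ.neighborSet x).Finite) (x : X)
    (n : ℕ) : {y | Γ.dist y x ≤ n}.Finite := by
  induction n with
  | zero =>
    exact (Set.finite_singleton x).subset fun y hy => hconn.dist_eq_zero_iff.1 (Nat.le_zero.1 hy)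
  | succ n ih =>
    refine ((Set.finite_singleton x).union (ih.biUnion fun z _ => hfin z)).subset fun y hy => ?_
    obtain rfl | hyx := eq_or_ne y x
    · exact .inl rfl
    · obtain ⟨z, hz, hlt⟩ := exists_adj_dist_lt hconn hyx
      exact .inr (Set.mem_biUnion (Nat.le_of_lt_succ (hlt.trans_le hy)) hz.symm)

theorem connected_of_invariant [IsPreprimitive G X] (hΓ : InvariantColoring G Γ.Adj)
    (hne : Γ ≠ ⊥) : Γ.Connected := by
  obtain ⟨x, y, hxy⟩ := SimpleGraph.ne_bot_iff_exists_adj.1 hne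
  refine (SimpleGraph.connected_iff _).2 ⟨fun u v => ?_, ⟨x⟩⟩
  have hinv : InvariantColoring G Γ.reachableSetoid := .of_imp fun g u v (huv : Γ.Reachable u v) =>
    huv.map ⟨(g • ·), fun {a b} h => (hΓ g a b).mpr h⟩
  rcases setoid_eq_bot_or_eq_top_of_invariant hinv with h | h
  · exact absurd ((Setoid.ext_iff.1 h x y).1 hxy.reachable) hxy.ne
  · exact (Setoid.ext_iff.1 h u v).2 trivial

theorem invariantColoring_dist (hconn : Γ.Connected) (hΓ : InvariantColoring G Γ.Adj) :
    InvariantColoring G Γ.dist := by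
  have hle (g : G) (x y : X) : Γ.dist (g • x) (g • y) ≤ Γ.dist x y := by
    obtain ⟨p, hp⟩ := (hconn x y).exists_walk_length_eq_dist
    let φ : Γ →g Γ := ⟨(g • ·), fun {a b} h => (hΓ g a b).mpr h⟩
    rw [← hp, ← SimpleGraph.Walk.length_map φ p]
    exact SimpleGraph.dist_le _
  exact fun g x y => (hle g x y).antisymm (by simpa using hle g⁻¹ (g • x) (g • y))

theorem differences_dist_infinite [Infinite X] [IsPreprimitive G X]
    (hΓ : InvariantColoring G Γ.Adj) (hconn : Γ.Connected)
    (hfin : ∀ x, (Γ.neighborSet x).Finite) {x y : X} (hxy : x ≠ y) :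
    (differences Γ.dist x y).Infinite := by
  refine (differences_infinite_or_finite (invariantColoring_dist hconn hΓ)).resolve_right
    (fun hdiff => ?_) x y hxy
  obtain ⟨z, hz⟩ := ((Set.finite_singleton x).union
    ((hfin x).biUnion fun y _ => hdiff x y)).exists_notMem
  simp only [Set.mem_union, Set.mem_singleton_iff, Set.mem_iUnion, not_or, not_exists] at hz
  obtain ⟨y, hy, hlt⟩ := exists_adj_dist_lt hconn (Ne.symm hz.1)
  exact hz.2 y hy hlt.ne'

/-- `w` is farther from every point of `B` than the diameter of `B`, so no other point of
`insert w B` can be its image. -/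
theorem smul_eq_self_of_forall_lt {d : X → X → ℕ} (hd : InvariantColoring G d) {B : Set X} {w : X}
    (hB : B.Nontrivial) (hw : ∀ x ∈ B, ∀ y ∈ B, ∀ z ∈ B, d x y < d w z) {g : G}
    (hg : g ∈ stabilizer G (insert w B)) : g • w = w := by
  by_contra hne
  have hgw : g • w ∈ B := ((mem_stabilizer_set.1 hg w).2 (.inl rfl)).resolve_left hne
  obtain ⟨b, hb, hbw⟩ := hB.exists_ne (g • w)
  have hgy : g⁻¹ • b ∈ B :=
    ((mem_stabilizer_set.1 (inv_mem hg) b).2 (.inr hb)).resolve_left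
      fun h => hbw (inv_smul_eq_iff.1 h)
  have hlt := hw _ hgw b hb _ hgy
  rw [← hd g w, smul_inv_smul] at hlt
  exact hlt.false

theorem mem_stabilizer_of_insert {B : Set X} {w : X} (hwB : w ∉ B) {g : G}
    (hg : g ∈ stabilizer G (insert w B)) (hgw : g • w = w) : g ∈ stabilizer G B := by
  have hw : g ∈ stabilizer G ({w} : Set X) := by
    rw [mem_stabilizer_iff, Set.smul_set_singleton, hgw]
  rw [mem_stabilizer_iff] at hg hw ⊢
  rw [← Set.insert_sdiff_self_of_notMem hwB, Set.smul_set_sdiff, hg, hw]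

theorem exists_mem_differences_dist_forall_lt [Infinite X] [IsPreprimitive G X]
    (hΓ : InvariantColoring G Γ.Adj) (hconn : Γ.Connected)
    (hfin : ∀ x, (Γ.neighborSet x).Finite) {x y : X} (hxy : x ≠ y) (B : Finset X) :
    ∃ w ∈ differences Γ.dist x y, ∀ u ∈ B, ∀ v ∈ B, ∀ z ∈ B, Γ.dist u v < Γ.dist w z := by
  have hnear : (⋃ p ∈ (B ×ˢ B) ×ˢ B, {w | Γ.dist w p.2 ≤ Γ.dist p.1.1 p.1.2}).Finite :=
    Finset.finite_toSet _ |>.biUnion fun p _ => finite_setOf_dist_le hconn hfin _ _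
  obtain ⟨w, hw, hwB⟩ := ((differences_dist_infinite hΓ hconn hfin hxy).sdiff hnear).nonempty
  refine ⟨w, hw, fun u hu v hv z hz => not_le.1 fun hle => hwB ?_⟩
  exact Set.mem_biUnion (x := ((u, v), z)) (by simp [hu, hv, hz]) hle

theorem locallyRigid_of_locallyFinite [Infinite X] [IsPreprimitive G X]
    (hΓ : InvariantColoring G Γ.Adj) (hne : Γ ≠ ⊥) (hfin : ∀ x, (Γ.neighborSet x).Finite) :
    LocallyRigid G X := by
  classical
  have hconn : Γ.Connected := connected_of_invariant hΓ hne
  have hd : InvariantColoring G Γ.dist := invariantColoring_dist hconn hΓ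
  intro A
  suffices ∃ B : Finset X, ∀ f ∈ (fun (g : G) (x : X) => g • x) '' stabilizer G (B : Set X),
      ∀ a ∈ A, f a = a from
    this.imp fun B hB g hg => (mem_fixingSubgroup_iff G).2 fun a ha => hB _ ⟨g, hg, rfl⟩ a ha
  refine exists_forall_fix_of_descent (Q := fun B => A ⊆ B) ⟨A, subset_rfl⟩ ?_ ?_
  · rintro B hAB _ ⟨g, hg, rfl⟩ a ha
    exact (mem_stabilizer_set.1 hg a).2 (hAB ha)
  · rintro B hAB _ ⟨g, hg, rfl⟩ a ha hga
    have hgaB : g • a ∈ B := (mem_stabilizer_set.1 hg a).2 (hAB ha)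
    obtain ⟨w, hw, hwB⟩ :=
      exists_mem_differences_dist_forall_lt hΓ hconn hfin (Ne.symm hga) B
    have hwnB : w ∉ (B : Set X) := fun h => (hwB w h w h w h).false
    refine ⟨insert w B, hAB.trans (Finset.subset_insert w B), ?_⟩
    rintro _ ⟨g', hg', rfl⟩
    rw [Finset.coe_insert] at hg'
    have hg'w : g' • w = w :=
      smul_eq_self_of_forall_lt hd ⟨_, hgaB, a, hAB ha, hga⟩ hwB hg'
    refine ⟨fun heq => hw ?_, _, ⟨g', mem_stabilizer_of_insert hwnB hg' hg'w, rfl⟩,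
      Set.eqOn_refl _ _⟩
    rw [← hd g' a, hg'w]
    exact congrArg (Γ.dist · w) heq

end LocallyFinite

section FiniteDifferences

variable {X α G : Type*} [Infinite X] [Group G] [MulAction G X] [IsPreprimitive G X]
  {c : X → X → α}

theorem finite_setOf_ncard_differences_le {X : Type*} [Finite α] {c : X → X → α}
    (hfin : ∀ x y, (differences c x y).Finite) {x : X}
    (h : ∀ e, {z | c x z = e}.Finite ∨
      {y | ∀ z ≠ y, c y z = e → c x y ≠ c z y}.Infinite) (k : ℕ) :
    {z | (differences c x z).ncard ≤ k}.Finite := by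
  classical
  suffices hcol : ∀ e, {z | c x z = e ∧ (differences c x z).ncard ≤ k}.Finite from
    (Set.finite_iUnion hcol).subset fun z hz => Set.mem_iUnion.2 ⟨c x z, rfl, hz⟩
  intro e
  rcases h e with he | hT
  · exact he.subset fun z hz => hz.1
  obtain ⟨Y, hYT, hY⟩ := hT.exists_subset_card_eq (k + 1)
  have hF : (⋃ y ∈ Y, differences c x y).Finite := Y.finite_toSet.biUnion fun y _ => hfin x y
  refine (Y.finite_toSet.union hF).subset fun z ⟨hz, hzk⟩ => ?_
  by_contra hzF
  simp only [Set.mem_union, Finset.mem_coe, Set.mem_iUnion, not_or, not_exists] at hzF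
  have hsub : (Y : Set X) ⊆ differences c x z := by
    refine fun y hy => hYT hy z (fun hzy => hzF.1 (hzy ▸ hy)) ?_
    rw [← hz]
    exact (not_not.1 (hzF.2 y hy)).symm
  have hcard := Set.ncard_le_ncard hsub (hfin x z)
  rw [Set.ncard_coe_finset, hY] at hcard
  exact (hcard.trans hzk).not_gt k.lt_succ_self

theorem locallyRigid_of_finite_setOf_ncard_differences_le (hc : InvariantColoring G c)
    (hfin : ∀ x k, {z | (differences c x z).ncard ≤ k}.Finite) : LocallyRigid G X := by
  obtain ⟨a, b, hab⟩ := exists_pair_ne X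
  let Γ : SimpleGraph X :=
    { Adj x y := x ≠ y ∧ (differences c x y).ncard ≤ (differences c a b).ncard
      symm := ⟨fun x y h => ⟨h.1.symm, differences_comm c x y ▸ h.2⟩⟩
      loopless := ⟨fun x h => h.1 rfl⟩ }
  have hΓ : InvariantColoring G Γ.Adj := .of_imp fun g x y h => by
    refine ⟨(MulAction.injective g).ne h.1, ?_⟩
    rw [differences_smul hc, Set.ncard_image_of_injective _ (MulAction.injective g)]
    exact h.2
  exact locallyRigid_of_locallyFinite hΓ
    (SimpleGraph.ne_bot_iff_exists_adj.2 ⟨a, b, hab, le_rfl⟩)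
    fun x => (hfin x _).subset fun y hy => hy.2

theorem locallyRigid_of_tournament {r : X → X → Prop} [Std.Asymm r] [Std.Trichotomous r]
    (hr : InvariantColoring G r) : LocallyRigid G X := by
  rcases differences_infinite_or_finite hr with hinf | hfin
  · exact locallyRigid_of_tournament_of_infinite hr hinf
  · refine locallyRigid_of_finite_setOf_ncard_differences_le hr fun x k =>
      finite_setOf_ncard_differences_le hfin (fun e => ?_) k
    refine (Set.finite_or_infinite _).imp_right fun he => he.mono fun y hy z hzy hyz hxz => ?_
    have hne : r z y ↔ ¬ r y z := rel_iff_not_rel_of_ne hzy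
    rw [← hxz, hy, hyz] at hne
    exact iff_not_self hne

theorem finite_setOf_color_eq {X : Type*} {c : X → X → α}
    (hfin : ∀ x y, (differences c x y).Finite) {e : α} {x : X} (hx : {z | c x z = e}.Finite)
    (y : X) : {z | c y z = e}.Finite :=
  (hx.union (hfin x y)).subset fun _ hz =>
    or_iff_not_imp_left.2 fun hxz hxy => hxz (hxy.trans hz)

theorem locallyRigid_of_graph {Γ : SimpleGraph X} (hΓ : InvariantColoring G Γ.Adj) (hbot : Γ ≠ ⊥)
    (htop : Γ ≠ ⊤) : LocallyRigid G X := by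
  rcases differences_infinite_or_finite hΓ with hinf | hfin
  · exact locallyRigid_of_symm_of_infinite (fun x y => propext (Γ.adj_comm x y)) hΓ hinf
  by_cases hclass : ∃ x e, {z | Γ.Adj x z = e}.Finite
  · obtain ⟨x, e, hx⟩ := hclass
    have hx := finite_setOf_color_eq hfin hx
    by_cases he : e
    · exact locallyRigid_of_locallyFinite hΓ hbot fun y =>
        (hx y).subset fun z hz => propext ⟨fun _ => he, fun _ => hz⟩
    · have hΓc : InvariantColoring G Γᶜ.Adj := fun g y z => by
        simp only [SimpleGraph.compl_adj, hΓ g y z, (MulAction.injective g).ne_iff]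
      exact locallyRigid_of_locallyFinite hΓc (mt compl_eq_bot.1 htop) fun y =>
        (hx y).subset fun z hz => propext ⟨fun h => absurd h hz.2, fun h => absurd h he⟩
  · push Not at hclass
    refine locallyRigid_of_finite_setOf_ncard_differences_le hΓ fun x k =>
      finite_setOf_ncard_differences_le hfin (fun e => .inr ?_) k
    refine (hclass x ¬e).mono fun y hy z _ hyz hxz => ?_
    have hxy : Γ.Adj x y = ¬e := hy
    rw [Γ.adj_comm z y, hyz, hxy] at hxz
    exact not_iff_self hxz.to_iff

end FiniteDifferences

section Main

variable {G X : Type*} [Group G] [MulAction G X]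

theorem exists_invariant_graph_or_tournament (h : ¬ IsMultiplyPretransitive G X 2) :
    (∃ Γ : SimpleGraph X, InvariantColoring G Γ.Adj ∧ Γ ≠ ⊥ ∧ Γ ≠ ⊤) ∨
      ∃ r : X → X → Prop, InvariantColoring G r ∧ Std.Asymm r ∧ Std.Trichotomous r := by
  simp only [is_two_pretransitive_iff, not_forall, not_exists, not_and] at h
  obtain ⟨a, b, p, q, hab, hpq, hnot⟩ := h
  let r (x y : X) : Prop := ∃ g : G, g • a = x ∧ g • b = y
  have hr : InvariantColoring G r := .of_imp fun g x y ⟨k, hx, hy⟩ =>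
    ⟨g * k, by rw [mul_smul, hx], by rw [mul_smul, hy]⟩
  let Γ : SimpleGraph X := SimpleGraph.fromRel r
  have hΓ : InvariantColoring G Γ.Adj := fun g x y => by
    simp only [Γ, SimpleGraph.fromRel_adj, hr g, (MulAction.injective g).ne_iff]
  have hab' : r a b := ⟨1, one_smul G a, one_smul G b⟩
  by_cases htop : Γ = ⊤
  · have htotal {x y : X} (hxy : x ≠ y) : r x y ∨ r y x := by
      have hadj : Γ.Adj x y := htop ▸ hxy
      exact ((SimpleGraph.fromRel_adj r x y).1 hadj).2
    have hba : ¬ r b a := by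
      rintro ⟨s, hsa, hsb⟩
      rcases htotal hpq with ⟨g, hp, hq⟩ | ⟨g, hq, hp⟩
      · exact hnot g hp hq
      · exact hnot (g * s) (by rw [mul_smul, hsa, hp]) (by rw [mul_smul, hsb, hq])
    refine .inr ⟨r, hr, ⟨?_⟩, ⟨fun x y hxy hyx => ?_⟩⟩
    · rintro _ _ ⟨g, rfl, rfl⟩ hyx
      exact hba ((hr g b a).mp hyx)
    · by_contra hne
      exact (htotal hne).elim hxy hyx
  · exact .inl ⟨Γ, hΓ, SimpleGraph.ne_bot_iff_exists_adj.2
      ⟨a, b, (SimpleGraph.fromRel_adj r a b).2 ⟨hab, .inl hab'⟩⟩, htop⟩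

theorem locallyRigid_of_not_two_pretransitive [Infinite X] [IsPreprimitive G X]
    (h : ¬ IsMultiplyPretransitive G X 2) : LocallyRigid G X := by
  rcases exists_invariant_graph_or_tournament h with ⟨Γ, hΓ, hbot, htop⟩ | ⟨r, hr, _, _⟩
  · exact locallyRigid_of_graph hΓ hbot htop
  · exact locallyRigid_of_tournament hr

end Main

theorem eq_of_locallyRigid {X : Type*} [DecidableEq X] {G H : Subgroup (Equiv.Perm X)}
    (hle : H ≤ G) (hHc : IsClosedGroup H)
    (horb : ∀ s t : Finset X, (∃ g ∈ G, s.image g = t) → ∃ h ∈ H, s.image h = t)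
    (hG : LocallyRigid G X) : H = G := by
  refine hle.antisymm fun g hg => hHc g fun s => ?_
  obtain ⟨B, hB⟩ := hG s
  obtain ⟨h, hh, himg⟩ := horb B _ ⟨g, hg, rfl⟩
  refine ⟨h, hh, fun x hx => ?_⟩
  have himg : h '' B = g '' B := by exact_mod_cast himg
  have hstab : (⟨h, hle hh⟩ : G)⁻¹ * ⟨g, hg⟩ ∈ stabilizer G (B : Set X) := by
    rw [mem_stabilizer_iff, mul_smul, inv_smul_eq_iff]
    exact himg.symm
  have hfix := (mem_fixingSubgroup_iff G).1 (hB hstab) x hx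
  rw [mul_smul, inv_smul_eq_iff] at hfix
  exact hfix.symm

theorem stmt19_general {X : Type*} [Infinite X] [DecidableEq X] (G H : Subgroup (Equiv.Perm X))
    (hle : H ≤ G) (hHc : IsClosedGroup H)
    (horb : ∀ s t : Finset X, (∃ g ∈ G, s.image g = t) → ∃ h ∈ H, s.image h = t)
    (htrans : ∀ x y : X, ∃ g ∈ G, g x = y)
    (hprim : ∀ r : Setoid X, (∀ g ∈ G, ∀ x y : X, r.r x y → r.r (g x) (g y)) →
      (∀ x y : X, r.r x y → x = y) ∨ (∀ x y : X, r.r x y))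
    (hnot2t : ¬ ∀ a b c d : X, a ≠ b → c ≠ d → ∃ g ∈ G, g a = c ∧ g b = d) :
    H = G := by
  have : IsPretransitive G X := ⟨fun x y =>
    let ⟨g, hg, hgx⟩ := htrans x y
    ⟨⟨g, hg⟩, hgx⟩⟩
  have : IsPreprimitive G X := isPreprimitive_of_forall_setoid fun r hr =>
    (hprim r fun g hg x y => (hr ⟨g, hg⟩ x y).mpr).imp
      (fun h => eq_bot_iff.2 h) fun h => eq_top_iff.2 fun x y _ => h x y
  have hnot : ¬ IsMultiplyPretransitive G X 2 := fun h2 => hnot2t fun a b c d hab hcd => by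
    obtain ⟨g, ha, hb⟩ := is_two_pretransitive_iff.1 h2 hab hcd
    exact ⟨g, g.2, ha, hb⟩
  exact eq_of_locallyRigid hle hHc horb (locallyRigid_of_not_two_pretransitive hnot)

/-- main theorem: closed orbit-equivalent H ≤ G on infinite X, with G primitive
    but not 2-transitive, implies H = G. -/
theorem stmt19 {X : Type*} [Infinite X] [DecidableEq X] (G H : Subgroup (Equiv.Perm X))
    (hle : H ≤ G) (hGc : IsClosedGroup G) (hHc : IsClosedGroup H)
    (horb : ∀ s t : Finset X, (∃ g ∈ G, s.image g = t) ↔ ∃ h ∈ H, s.image h = t)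
    (htrans : ∀ x y : X, ∃ g ∈ G, g x = y)
    (hprim : ∀ r : Setoid X, (∀ g ∈ G, ∀ x y : X, r.r x y → r.r (g x) (g y)) →
      (∀ x y : X, r.r x y → x = y) ∨ (∀ x y : X, r.r x y))
    (hnot2t : ¬ ∀ a b c d : X, a ≠ b → c ≠ d → ∃ g ∈ G, g a = c ∧ g b = d) :
    H = G :=
  stmt19_general G H hle hHc (fun s t => (horb s t).1) htrans hprim hnot2t
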